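/- arXiv:0909.2304 — 2 statements merged into one kernel-verified Lean document; each statement's English description precedes it below -/
import Mathlib

section
/- Let q = 2^n, let k ≥ 2, and let f(x) = x^{2^k+1} + g(x) where g(x) = Σ_{j=0}^{2^{k-1}+1} a_j x^j ∈ F_q[x] has degree at most 2^{k-1}+1. Suppose there exists an index j with 3 ≤ j ≤ 2^{k-1}+1 such that a_j ≠ 0 and φ_j is absolutely irreducible. Then φ_f is absolutely irreducible. -/
/-!
Put `ψ = φ_{2^k+1}`. It is a form of degree `2^k - 2`, and `φ_f - ψ` has degree less than half of
that. Let `φ_f = a * b` with `deg b ≤ deg a`, and write `a⁺`, `b⁺` for the leading forms, so that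
`a⁺ * b⁺ = ψ`. In `(a - a⁺) * b = a⁺ * (b⁺ - b) + (φ_f - ψ)` the last summand has degree less than
`deg a`. If `b⁺ ≠ b`, comparing leading forms shows that `b⁺` divides `a⁺` times a form of degree
less than `deg b`; this is impossible, as `a⁺` and `b⁺` are coprime because `ψ` is squarefree.
Hence `b` is homogeneous and divides every homogeneous component of `φ_f`, in particular both `ψ`
and `φ_j`.

Over a field containing `𝔽_q` with `q = 2^k`, the polynomial `(x+y)(x+z)(y+z) ψ` is
`u^q v + u v^q` with `u = x + z` and `v = y + z`, a product of linear forms. The irreducible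
polynomial `φ_j` has degree at least `2`, so it is coprime to `ψ` and `b` is a unit.
-/

open MvPolynomial

/-- The polynomial `(x+y)(x+z)(y+z)` in `F[x,y,z]`. -/
noncomputable def e3 (F : Type*) [CommRing F] : MvPolynomial (Fin 3) F :=
  (X 0 + X 1) * (X 0 + X 2) * (X 1 + X 2)

/-- The polynomial `f(x) + f(y) + f(z) + f(x+y+z)` in `F[x,y,z]`. -/
noncomputable def fsum {F : Type*} [CommRing F] (f : Polynomial F) :
    MvPolynomial (Fin 3) F :=
  Polynomial.aeval (X 0 : MvPolynomial (Fin 3) F) f +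
    Polynomial.aeval (X 1 : MvPolynomial (Fin 3) F) f +
    Polynomial.aeval (X 2 : MvPolynomial (Fin 3) F) f +
    Polynomial.aeval (X 0 + X 1 + X 2 : MvPolynomial (Fin 3) F) f

/-- The polynomial `x^j + y^j + z^j + (x+y+z)^j` in `F[x,y,z]`. -/
noncomputable def powSum (F : Type*) [CommRing F] (j : ℕ) : MvPolynomial (Fin 3) F :=
  X 0 ^ j + X 1 ^ j + X 2 ^ j + (X 0 + X 1 + X 2) ^ j

section HomogeneousComponent

variable {σ R : Type*} [CommSemiring R]

attribute [local instance] MvPolynomial.gradedAlgebra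

lemma coe_decompose_homogeneousSubmodule (p : MvPolynomial σ R) (n : ℕ) :
    (DirectSum.decompose (homogeneousSubmodule σ R) p n : MvPolynomial σ R) =
      homogeneousComponent n p :=
  decomposition.decompose'_apply p n

lemma homogeneousComponent_add_mul_of_isHomogeneous {p : MvPolynomial σ R} {m : ℕ}
    (hp : p.IsHomogeneous m) (q : MvPolynomial σ R) (n : ℕ) :
    homogeneousComponent (m + n) (p * q) = p * homogeneousComponent n q := by
  simpa only [coe_decompose_homogeneousSubmodule] using
    DirectSum.coe_decompose_mul_add_of_left_mem (homogeneousSubmodule σ R) (j := n) (b := q) hp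

lemma dvd_homogeneousComponent_of_isHomogeneous {p q : MvPolynomial σ R} {m : ℕ}
    (hp : p.IsHomogeneous m) (h : p ∣ q) (n : ℕ) : p ∣ homogeneousComponent n q := by
  have hI : (Ideal.span {p}).IsHomogeneous (homogeneousSubmodule σ R) :=
    Ideal.homogeneous_span _ _ (by simpa using ⟨m, hp⟩)
  exact Ideal.mem_span_singleton.1
    (homogeneousComponent_mem_of_mem hI (Ideal.mem_span_singleton.2 h) n)

end HomogeneousComponent

/-- The top-degree homogeneous component of a multivariate polynomial. -/
noncomputable def leadingForm {σ R : Type*} [CommSemiring R] (p : MvPolynomial σ R) :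
    MvPolynomial σ R :=
  homogeneousComponent p.totalDegree p

section LeadingForm

variable {σ R : Type*}

section CommSemiring

variable [CommSemiring R] {p q : MvPolynomial σ R}

lemma isHomogeneous_leadingForm (p : MvPolynomial σ R) :
    (leadingForm p).IsHomogeneous p.totalDegree :=
  homogeneousComponent_isHomogeneous _ _

lemma leadingForm_ne_zero (hp : p ≠ 0) : leadingForm p ≠ 0 := by
  obtain ⟨d, hd, hdeg⟩ := Finset.exists_mem_eq_sup p.support (support_nonempty.2 hp)
    (fun s => s.sum fun _ e => e)
  have hcoeff : coeff d (leadingForm p) = coeff d p := by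
    rw [leadingForm, coeff_homogeneousComponent, if_pos]
    exact hdeg.symm
  exact fun h => mem_support_iff.1 hd (by rw [← hcoeff, h, coeff_zero])

lemma totalDegree_leadingForm (p : MvPolynomial σ R) :
    (leadingForm p).totalDegree = p.totalDegree := by
  rcases eq_or_ne p 0 with rfl | hp
  · simp [leadingForm]
  · exact (isHomogeneous_leadingForm p).totalDegree (leadingForm_ne_zero hp)

lemma leadingForm_eq_self {n : ℕ} (hp : p.IsHomogeneous n) : leadingForm p = p := by
  rcases eq_or_ne p 0 with rfl | h
  · simp [leadingForm]
  · exact homogeneousComponent_eq_self (hp.totalDegree h ▸ hp)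

lemma leadingForm_add_of_totalDegree_lt (h : q.totalDegree < p.totalDegree) :
    leadingForm (p + q) = leadingForm p := by
  rw [leadingForm, totalDegree_add_eq_left_of_totalDegree_lt h, map_add,
    homogeneousComponent_eq_zero _ _ h, add_zero, leadingForm]

end CommSemiring

section CommRing

variable [CommRing R]

lemma totalDegree_leadingForm_sub_self_lt {p : MvPolynomial σ R} (h : leadingForm p - p ≠ 0) :
    (leadingForm p - p).totalDegree < p.totalDegree := by
  have hle : (leadingForm p - p).totalDegree ≤ p.totalDegree :=
    (totalDegree_sub _ _).trans (max_le (totalDegree_leadingForm p).le le_rfl)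
  refine hle.lt_of_ne fun heq => leadingForm_ne_zero h ?_
  rw [leadingForm, heq, map_sub, homogeneousComponent_eq_self (isHomogeneous_leadingForm p),
    leadingForm, sub_self]

lemma leadingForm_mul [IsDomain R] (p q : MvPolynomial σ R) :
    leadingForm (p * q) = leadingForm p * leadingForm q := by
  rcases eq_or_ne p 0 with rfl | hp
  · simp [leadingForm]
  rcases eq_or_ne q 0 with rfl | hq
  · simp [leadingForm]
  have hrest : homogeneousComponent (p.totalDegree + q.totalDegree) ((leadingForm p - p) * q) =
      0 := by
    rcases eq_or_ne (leadingForm p - p) 0 with h | h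
    · rw [h, zero_mul, map_zero]
    · refine homogeneousComponent_eq_zero _ _ ?_
      rw [totalDegree_mul_of_isDomain h hq]
      exact Nat.add_lt_add_right (totalDegree_leadingForm_sub_self_lt h) _
  rw [sub_mul, map_sub, sub_eq_zero,
    homogeneousComponent_add_mul_of_isHomogeneous (isHomogeneous_leadingForm p)] at hrest
  rw [leadingForm, totalDegree_mul_of_isDomain hp hq, ← hrest]
  rfl

end CommRing

end LeadingForm

section Irreducibility

variable {σ R : Type*} [CommRing R] [IsDomain R] [UniqueFactorizationMonoid R]

lemma leadingForm_eq_self_of_isRelPrime {p q : MvPolynomial σ R}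
    (hrel : IsRelPrime (leadingForm q) (leadingForm p))
    (hlow : (p * q - leadingForm (p * q)).totalDegree < p.totalDegree) :
    leadingForm q = q := by
  by_contra hq
  rw [← sub_eq_zero] at hq
  have hp : leadingForm p ≠ 0 := leadingForm_ne_zero (by rintro rfl; simp at hlow)
  have hlow' : (p * q - leadingForm (p * q)).totalDegree <
      (leadingForm p * (leadingForm q - q)).totalDegree := by
    rw [totalDegree_mul_of_isDomain hp hq, totalDegree_leadingForm]
    exact Nat.lt_add_right _ hlow
  have hsplit : (p - leadingForm p) * q =
      leadingForm p * (leadingForm q - q) + (p * q - leadingForm (p * q)) := by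
    rw [leadingForm_mul]
    ring
  have hdvd : leadingForm q ∣ leadingForm p * leadingForm (leadingForm q - q) := by
    have h := congrArg leadingForm hsplit
    rw [leadingForm_add_of_totalDegree_lt hlow', leadingForm_mul, leadingForm_mul,
      leadingForm_eq_self (isHomogeneous_leadingForm p)] at h
    exact h ▸ dvd_mul_left _ _
  have hle := totalDegree_le_of_dvd_of_isDomain (hrel.dvd_of_dvd_mul_left hdvd)
    (leadingForm_ne_zero hq)
  rw [totalDegree_leadingForm, totalDegree_leadingForm] at hle
  exact (totalDegree_leadingForm_sub_self_lt hq).not_ge hle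

theorem irreducible_add_of_squarefree_of_isRelPrime {p q : MvPolynomial σ R} {d m : ℕ}
    (hp : p.IsHomogeneous d) (hsq : Squarefree p) (hq : 2 * q.totalDegree < d)
    (hrel : IsRelPrime p (homogeneousComponent m q)) : Irreducible (p + q) := by
  have hpdeg : p.totalDegree = d := hp.totalDegree hsq.ne_zero
  have hlt : q.totalDegree < p.totalDegree := by omega
  have hlead : leadingForm (p + q) = p :=
    (leadingForm_add_of_totalDegree_lt hlt).trans (leadingForm_eq_self hp)
  have hdeg : (p + q).totalDegree = d := by rw [← totalDegree_leadingForm, hlead, hpdeg]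
  refine ⟨fun hu => ?_, fun a b hab => ?_⟩
  · have := (isUnit_iff_totalDegree_of_isReduced.1 hu).2
    omega
  wlog hle : b.totalDegree ≤ a.totalDegree generalizing a b
  · exact (this b a (hab.trans (mul_comm a b)) (by omega)).symm
  right
  have hmul : leadingForm a * leadingForm b = p := by rw [← leadingForm_mul, ← hab, hlead]
  have hb : leadingForm b = b := by
    refine leadingForm_eq_self_of_isRelPrime (p := a)
      (fun c hcb hca => hsq c (hmul ▸ mul_dvd_mul hca hcb)) ?_
    have hsum : d ≤ a.totalDegree + b.totalDegree := hdeg ▸ hab ▸ totalDegree_mul a b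
    rw [← hab, hlead, add_sub_cancel_left]
    omega
  have hbp : b ∣ p := ⟨leadingForm a, by rw [← hmul, hb, mul_comm]⟩
  have hbq : b ∣ q := (dvd_add_right hbp).1 (hab ▸ dvd_mul_left b a)
  have hbhom := isHomogeneous_leadingForm b
  rw [hb] at hbhom
  exact hrel hbp (dvd_homogeneousComponent_of_isHomogeneous hbhom hbq m)

end Irreducibility

lemma homogenize_natDegree_eq_prod_roots {R : Type*} [CommRing R] [IsDomain R] {f : Polynomial R}
    (hf : f.Splits) (hm : f.Monic) :
    f.homogenize f.natDegree = (f.roots.map fun a => X 0 - C a * X 1).prod := by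
  refine Polynomial.homogenize_eq_of_isHomogeneous ?_ ?_
  · have hhom (s : Multiset R) : IsHomogeneous
        (s.map fun a => (X 0 - C a * X 1 : MvPolynomial (Fin 2) R)).prod s.card := by
      induction s using Multiset.induction with
      | empty => exact isHomogeneous_one _ _
      | cons a s ih =>
        simpa [add_comm] using ((isHomogeneous_X R 0).sub ((isHomogeneous_X R 1).C_mul a)).mul ih
    exact hf.natDegree_eq_card_roots ▸ hhom f.roots
  · conv_rhs => rw [hf.eq_prod_roots_of_monic hm]
    simp [map_multiset_prod, Multiset.map_map]

lemma pow_sub_mul_pow_eq_prod_roots {K A : Type*} [Field K] [CommRing A] [Algebra K A] {q : ℕ}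
    (hq : 1 < q) (hK : (Polynomial.X ^ q - Polynomial.X : Polynomial K).Splits) (u v : A) :
    u ^ q - u * v ^ (q - 1) =
      ((Polynomial.X ^ q - Polynomial.X : Polynomial K).roots.map
        fun a => u - algebraMap K A a * v).prod := by
  have hdeg := FiniteField.X_pow_card_sub_X_natDegree_eq K hq
  have hmonic : (Polynomial.X ^ q - Polynomial.X : Polynomial K).Monic :=
    Polynomial.monic_X_pow_sub (by simpa using hq)
  have h := congrArg (aeval ![u, v]) (homogenize_natDegree_eq_prod_roots hK hmonic)
  rw [hdeg, Polynomial.homogenize_sub, Polynomial.homogenize_X_pow le_rfl,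
    Polynomial.homogenize_X (by omega)] at h
  simpa [map_multiset_prod, Multiset.map_map, Function.comp_def] using h

lemma dvd_derivation_of_mul_self_dvd {R A : Type*} [CommSemiring R] [CommSemiring A] [Algebra R A]
    (D : Derivation R A A) {a b : A} (h : a * a ∣ b) : a ∣ D b := by
  obtain ⟨c, rfl⟩ := h
  rw [mul_assoc, D.leibniz, smul_eq_mul, smul_eq_mul]
  exact dvd_add (dvd_mul_right _ _) ((dvd_mul_right _ _).mul_right _)

lemma isRelPrime_X_add_X {σ R : Type*} [CommRing R] [IsDomain R] {i j l : σ} (hij : i ≠ j)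
    (hil : i ≠ l) (hjl : j ≠ l) : IsRelPrime (X i + X l : MvPolynomial σ R) (X j + X l) := by
  classical
  have hirr : Irreducible (X j + X l : MvPolynomial σ R) := by
    have hcoeff : coeff (Finsupp.single j 1) (X j + X l : MvPolynomial σ R) = 1 := by
      simp [coeff_X, Finsupp.single_left_inj, hjl.symm]
    refine irreducible_of_totalDegree_eq_one
      (((isHomogeneous_X R j).add (isHomogeneous_X R l)).totalDegree fun h => ?_) fun c hc => ?_
    · simp [h] at hcoeff
    · exact isUnit_of_dvd_one (hcoeff ▸ hc _)
  refine (hirr.isRelPrime_iff_not_dvd.2 fun h => ?_).symm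
  have := map_dvd (eval (Pi.single i 1 : σ → R)) h
  simp [hij.symm, hil.symm] at this

section CommRing

variable (R : Type*) [CommRing R]

lemma isHomogeneous_e3 : (e3 R).IsHomogeneous 3 :=
  (((isHomogeneous_X R 0).add (isHomogeneous_X R 1)).mul
    ((isHomogeneous_X R 0).add (isHomogeneous_X R 2))).mul
    ((isHomogeneous_X R 1).add (isHomogeneous_X R 2))

lemma isHomogeneous_powSum (j : ℕ) : (powSum R j).IsHomogeneous j := by
  have hX (i : Fin 3) := isHomogeneous_X R i
  simpa only [powSum, one_mul] using ((((hX 0).pow j).add ((hX 1).pow j)).add ((hX 2).pow j)).add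
    ((((hX 0).add (hX 1)).add (hX 2)).pow j)

lemma e3_ne_zero [IsDomain R] : e3 R ≠ 0 := by
  have hX {i j : Fin 3} (hij : j ≠ i) : (X i + X j : MvPolynomial (Fin 3) R) ≠ 0 := fun h => by
    simpa [hij] using congrArg (eval (Pi.single i 1)) h
  exact mul_ne_zero (mul_ne_zero (hX (by decide)) (hX (by decide))) (hX (by decide))

variable {R}

lemma fsum_X_pow_add (g : Polynomial R) (n : ℕ) :
    fsum (Polynomial.X ^ n + g) = powSum R n + fsum g := by
  simp only [fsum, powSum, map_add, map_pow, Polynomial.aeval_X]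
  ring

lemma fsum_eq_sum (f : Polynomial R) :
    fsum f = ∑ i ∈ Finset.range (f.natDegree + 1), C (f.coeff i) * powSum R i := by
  simp only [fsum, powSum, Polynomial.aeval_eq_sum_range, ← Finset.sum_add_distrib,
    smul_eq_C_mul, mul_add]

lemma homogeneousComponent_fsum (f : Polynomial R) (m : ℕ) :
    homogeneousComponent m (fsum f) = C (f.coeff m) * powSum R m := by
  rw [fsum_eq_sum, map_sum, Finset.sum_eq_single m]
  · rw [homogeneousComponent_C_mul, homogeneousComponent_eq_self (isHomogeneous_powSum R m)]
  · intro i _ hi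
    rw [homogeneousComponent_C_mul, homogeneousComponent_of_mem (isHomogeneous_powSum R i),
      if_neg hi.symm, mul_zero]
  · intro hm
    rw [Polynomial.coeff_eq_zero_of_natDegree_lt (by simpa using hm), C_0, zero_mul, map_zero]

lemma totalDegree_fsum_le (f : Polynomial R) : (fsum f).totalDegree ≤ f.natDegree := by
  rw [fsum_eq_sum]
  refine totalDegree_finsetSum_le fun i hi => ?_
  exact (((isHomogeneous_powSum R i).C_mul _).totalDegree_le).trans
    (Nat.lt_succ_iff.1 (Finset.mem_range.1 hi))

lemma e3_mul_homogeneousComponent {f : Polynomial R} {Φ : MvPolynomial (Fin 3) R}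
    (h : e3 R * Φ = fsum f) (m : ℕ) :
    e3 R * homogeneousComponent m Φ = C (f.coeff (3 + m)) * powSum R (3 + m) := by
  rw [← homogeneousComponent_fsum, ← h,
    homogeneousComponent_add_mul_of_isHomogeneous (isHomogeneous_e3 R)]

lemma totalDegree_e3_mul [IsDomain R] {φ : MvPolynomial (Fin 3) R} (hφ : φ ≠ 0) :
    (e3 R * φ).totalDegree = 3 + φ.totalDegree := by
  rw [totalDegree_mul_of_isDomain (e3_ne_zero R) hφ,
    (isHomogeneous_e3 R).totalDegree (e3_ne_zero R)]

lemma three_add_totalDegree_le_of_e3_mul_eq_fsum [IsDomain R] {f : Polynomial R}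
    {φ : MvPolynomial (Fin 3) R} (hφ : e3 R * φ = fsum f) (hne : φ ≠ 0) :
    3 + φ.totalDegree ≤ f.natDegree := by
  rw [← totalDegree_e3_mul hne, hφ]
  exact totalDegree_fsum_le f

lemma three_add_totalDegree_of_e3_mul_eq_powSum [IsDomain R] {j : ℕ} {φ : MvPolynomial (Fin 3) R}
    (hφ : e3 R * φ = powSum R j) (hne : φ ≠ 0) : 3 + φ.totalDegree = j := by
  rw [← totalDegree_e3_mul hne, hφ, (isHomogeneous_powSum R j).totalDegree]
  exact hφ ▸ mul_ne_zero (e3_ne_zero R) hne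

section Map

variable {S : Type*} [CommRing S] (σ : R →+* S)

lemma map_e3 : map σ (e3 R) = e3 S := by
  simp [e3]

lemma map_powSum (j : ℕ) : map σ (powSum R j) = powSum S j := by
  simp [powSum]

lemma map_fsum (f : Polynomial R) : map σ (fsum f) = fsum (f.map σ) := by
  simp [fsum, Polynomial.aeval_def, Polynomial.hom_eval₂, Polynomial.eval₂_map]

end Map

end CommRing

section CharTwo

section CommRing

variable (R : Type*) [CommRing R] [CharP R 2]

lemma powSum_two_pow (k : ℕ) : powSum R (2 ^ k) = 0 := by
  rw [powSum, add_pow_char_pow, add_pow_char_pow, CharTwo.add_self_eq_zero]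

lemma powSum_two_pow_add_one (k : ℕ) :
    powSum R (2 ^ k + 1) =
      (X 0 + X 2) ^ 2 ^ k * (X 1 + X 2) + (X 0 + X 2) * (X 1 + X 2) ^ 2 ^ k := by
  simp only [powSum, pow_succ _ (2 ^ k), add_pow_char_pow]
  linear_combination (X 0 * X 0 ^ 2 ^ k + X 1 * X 1 ^ 2 ^ k) *
    (CharTwo.two_eq_zero : (2 : MvPolynomial (Fin 3) R) = 0)

lemma powSum_three : powSum R 3 = e3 R := by
  rw [powSum, e3]
  linear_combination (X 0 ^ 3 + X 1 ^ 3 + X 2 ^ 3 + (X 0 + X 1) * (X 0 + X 2) * (X 1 + X 2)) *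
    (CharTwo.two_eq_zero : (2 : MvPolynomial (Fin 3) R) = 0)

variable {R}

lemma five_le_of_irreducible [IsDomain R] {j : ℕ} {φ : MvPolynomial (Fin 3) R}
    (hφ : e3 R * φ = powSum R j) (hirr : Irreducible φ) : 5 ≤ j := by
  have hj3 : j ≠ 3 := by
    rintro rfl
    rw [powSum_three, mul_eq_left₀ (e3_ne_zero R)] at hφ
    exact hirr.not_isUnit (hφ ▸ isUnit_one)
  have hj4 : j ≠ 4 := by
    rintro rfl
    exact mul_ne_zero (e3_ne_zero R) hirr.ne_zero (hφ.trans (powSum_two_pow R 2))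
  have hj := three_add_totalDegree_of_e3_mul_eq_powSum hφ hirr.ne_zero
  omega

end CommRing

variable {K : Type*} [Field K] [CharP K 2]

lemma squarefree_powSum_two_pow_add_one {k : ℕ} (hk : k ≠ 0) :
    Squarefree (powSum K (2 ^ k + 1)) := by
  intro p hp
  have htwo : (2 : MvPolynomial (Fin 3) K) = 0 := CharTwo.two_eq_zero
  have h0 : pderiv 0 (powSum K (2 ^ k + 1)) = (X 1 + X 2) ^ 2 ^ k := by
    simp [powSum_two_pow_add_one, Derivation.leibniz_pow, pderiv_X, htwo, hk]
  have h1 : pderiv 1 (powSum K (2 ^ k + 1)) = (X 0 + X 2) ^ 2 ^ k := by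
    simp [powSum_two_pow_add_one, Derivation.leibniz_pow, pderiv_X, htwo, hk]
  have hrel : IsRelPrime ((X 0 + X 2) ^ 2 ^ k : MvPolynomial (Fin 3) K) ((X 1 + X 2) ^ 2 ^ k) :=
    (isRelPrime_X_add_X (by decide) (by decide) (by decide)).pow
  exact hrel (h1 ▸ dvd_derivation_of_mul_self_dvd (pderiv 1) hp)
    (h0 ▸ dvd_derivation_of_mul_self_dvd (pderiv 0) hp)

lemma totalDegree_le_one_of_dvd_powSum {k : ℕ} (hk : k ≠ 0)
    (hK : (Polynomial.X ^ 2 ^ k - Polynomial.X : Polynomial K).Splits)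
    {p : MvPolynomial (Fin 3) K} (hp : Irreducible p) (h : p ∣ powSum K (2 ^ k + 1)) :
    p.totalDegree ≤ 1 := by
  have hq : 1 < 2 ^ k := Nat.one_lt_two_pow hk
  have hX (i : Fin 3) := isHomogeneous_X K i
  have hfactor : powSum K (2 ^ k + 1) = (X 1 + X 2) *
      ((X 0 + X 2) ^ 2 ^ k - (X 0 + X 2) * (X 1 + X 2) ^ (2 ^ k - 1)) := by
    rw [powSum_two_pow_add_one, CharTwo.sub_eq_add,
      ← mul_pow_sub_one (by positivity : 2 ^ k ≠ 0) (X 1 + X 2)]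
    ring
  obtain ⟨l, hl, hl0, hpl⟩ :
      ∃ l : MvPolynomial (Fin 3) K, l.IsHomogeneous 1 ∧ l ≠ 0 ∧ p ∣ l := by
    rw [hfactor, pow_sub_mul_pow_eq_prod_roots hq hK] at h
    rcases hp.prime.dvd_or_dvd h with h | h
    · refine ⟨X 1 + X 2, (hX 1).add (hX 2), fun h0 => ?_, h⟩
      simpa using congrArg (eval (Pi.single 1 1)) h0
    · obtain ⟨a, -, ha⟩ := hp.prime.exists_mem_multiset_map_dvd h
      refine ⟨_, ((hX 0).add (hX 2)).sub (((hX 1).add (hX 2)).C_mul a), fun h0 => ?_, ha⟩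
      simpa using congrArg (eval (Pi.single 0 1)) h0
  exact (totalDegree_le_of_dvd_of_isDomain hpl hl0).trans hl.totalDegree_le

lemma isRelPrime_of_e3_mul_eq_powSum {k j : ℕ} (hk : k ≠ 0)
    (hK : (Polynomial.X ^ 2 ^ k - Polynomial.X : Polynomial K).Splits)
    {ψ φ : MvPolynomial (Fin 3) K} (hψ : e3 K * ψ = powSum K (2 ^ k + 1))
    (hφ : e3 K * φ = powSum K j) (hirr : Irreducible φ) : IsRelPrime ψ φ := by
  refine (hirr.isRelPrime_iff_not_dvd.2 fun hdvd => ?_).symm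
  have hdeg := totalDegree_le_one_of_dvd_powSum hk hK hirr (hψ ▸ hdvd.mul_left (e3 K))
  have hj := three_add_totalDegree_of_e3_mul_eq_powSum hφ hirr.ne_zero
  have hj5 := five_le_of_irreducible hφ hirr
  omega

theorem irreducible_of_e3_mul_eq_fsum {k : ℕ}
    (hK : (Polynomial.X ^ 2 ^ k - Polynomial.X : Polynomial K).Splits)
    {g : Polynomial K} (hg : g.natDegree ≤ 2 ^ (k - 1) + 1) {j : ℕ} (hgj : g.coeff j ≠ 0)
    {φj : MvPolynomial (Fin 3) K} (hφj : e3 K * φj = powSum K j) (hirr : Irreducible φj)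
    {φ : MvPolynomial (Fin 3) K} (hφ : e3 K * φ = fsum (Polynomial.X ^ (2 ^ k + 1) + g)) :
    Irreducible φ := by
  have hj5 : 5 ≤ j := five_le_of_irreducible hφj hirr
  have hjg : j ≤ g.natDegree := Polynomial.le_natDegree_of_ne_zero hgj
  have hk : k ≠ 0 := by
    rintro rfl
    omega
  have hpow : 2 ^ k = 2 * 2 ^ (k - 1) := (mul_pow_sub_one hk 2).symm
  have hlead : (Polynomial.X ^ (2 ^ k + 1) + g).coeff (2 ^ k + 1) = 1 := by
    rw [Polynomial.coeff_add, Polynomial.coeff_X_pow_self,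
      Polynomial.coeff_eq_zero_of_natDegree_lt (by omega), add_zero]
  set ψ := homogeneousComponent (2 ^ k - 2) φ
  have hψ : e3 K * ψ = powSum K (2 ^ k + 1) := by
    rw [e3_mul_homogeneousComponent hφ, show 3 + (2 ^ k - 2) = 2 ^ k + 1 by omega, hlead, C_1,
      one_mul]
  have hlow : e3 K * (φ - ψ) = fsum g := by
    rw [mul_sub, hφ, hψ, fsum_X_pow_add, add_sub_cancel_left]
  have hlowdeg : 2 * (φ - ψ).totalDegree < 2 ^ k - 2 := by
    rcases eq_or_ne (φ - ψ) 0 with h | h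
    · rw [h, totalDegree_zero]
      omega
    · have := three_add_totalDegree_le_of_e3_mul_eq_fsum hlow h
      omega
  have hcomp : homogeneousComponent (j - 3) (φ - ψ) = C (g.coeff j) * φj := by
    apply mul_left_cancel₀ (e3_ne_zero K)
    rw [e3_mul_homogeneousComponent hlow, show 3 + (j - 3) = j by omega, ← hφj, mul_left_comm]
  have hunit : IsUnit (C (g.coeff j) : MvPolynomial (Fin 3) K) := hgj.isUnit.map C
  rw [← add_sub_cancel ψ φ]
  refine irreducible_add_of_squarefree_of_isRelPrime (homogeneousComponent_isHomogeneous _ _)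
    ((squarefree_powSum_two_pow_add_one hk).squarefree_of_dvd ⟨_, hψ.symm.trans (mul_comm _ _)⟩)
    hlowdeg (m := j - 3) ?_
  rw [hcomp, isRelPrime_mul_unit_left_right hunit]
  exact isRelPrime_of_e3_mul_eq_powSum hk hK hψ hφj hirr

end CharTwo

theorem gold_degree_first_case_general {F K : Type*} [Field F] [Field K] [CharP K 2] [Algebra F K]
    {k : ℕ} (hK : (Polynomial.X ^ 2 ^ k - Polynomial.X : Polynomial K).Splits)
    {g f : Polynomial F} (hgdeg : g.natDegree ≤ 2 ^ (k - 1) + 1)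
    (hf : f = Polynomial.X ^ (2 ^ k + 1) + g) {j : ℕ} (haj : g.coeff j ≠ 0)
    {φj : MvPolynomial (Fin 3) F} (hφj : e3 F * φj = powSum F j)
    (hφjirr : Irreducible (map (algebraMap F K) φj))
    {φ : MvPolynomial (Fin 3) F} (hφ : e3 F * φ = fsum f) :
    Irreducible (map (algebraMap F K) φ) := by
  refine irreducible_of_e3_mul_eq_fsum hK (g := g.map (algebraMap F K)) (j := j)
    (by rwa [Polynomial.natDegree_map]) (by simpa using haj) ?_ hφjirr ?_
  · rw [← map_e3 (algebraMap F K), ← map_mul, hφj, map_powSum]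
  · rw [← map_e3 (algebraMap F K), ← map_mul, hφ, hf, map_fsum]
    simp

theorem gold_degree_first_case
    (n k : ℕ) (hn : 0 < n) (hk : 2 ≤ k) (F : Type*) [Field F] [Fintype F]
    (hF : Fintype.card F = 2 ^ n)
    (g : Polynomial F) (hgdeg : g.natDegree ≤ 2 ^ (k - 1) + 1)
    (f : Polynomial F) (hf : f = Polynomial.X ^ (2 ^ k + 1) + g)
    (j : ℕ) (hj3 : 3 ≤ j) (hjle : j ≤ 2 ^ (k - 1) + 1) (haj : g.coeff j ≠ 0)
    (φj : MvPolynomial (Fin 3) F) (hφj : e3 F * φj = powSum F j)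
    (hφjirr : Irreducible
      (MvPolynomial.map (algebraMap F (AlgebraicClosure F)) φj))
    (φ : MvPolynomial (Fin 3) F) (hφ : e3 F * φ = fsum f) :
    Irreducible (MvPolynomial.map (algebraMap F (AlgebraicClosure F)) φ) := by
  have : CharP F 2 := charP_of_card_eq_prime_pow hF
  have : CharP (AlgebraicClosure F) 2 := charP_of_injective_algebraMap' F 2
  exact gold_degree_first_case_general (IsAlgClosed.splits _) hgdeg hf haj hφj hφjirr hφ
end

section
/- Let q = 2^n and let F ∈ F_q[x,y,z,t] be homogeneous of positive degree with t not dividing F. Suppose there exists P ∈ F_q[x,y,z], irreducible over an algebraic closure of F_q, such that P divides F(x,y,z,0) but P^2 does not divide F(x,y,z,0). Then F has a factor G ∈ F_q[x,y,z,t] of positive degree that is absolutely irreducible. -/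
open MvPolynomial

/-- Substitution `x ↦ x, y ↦ y, z ↦ z, t ↦ 0` from `F[x,y,z,t]` to `F[x,y,z]`. -/
noncomputable def substT0 (F : Type*) [CommRing F] :
    Fin 4 → MvPolynomial (Fin 3) F := ![X 0, X 1, X 2, 0]

/-!
Over a Galois extension `K` of `F` in which `P` stays prime, `P` divides the image under the
substitution of some prime factor `R` of `Q`. Since `K` is faithfully flat over `F`, `P ^ 2` still
does not divide the image of `Q`, so `R` is unique up to a unit. Galois conjugation fixes `P`, `Q`
and the substitution, hence permutes the prime factors with this property: `R` is associated to
each of its conjugates. Once one of its coefficients is scaled to `1`, it is fixed by the Galois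
group and therefore defined over `F`.
-/

section PrimeFactors

variable {M N : Type*} [CommMonoidWithZero M]

lemma exists_prime_dvd_of_prime_dvd_map [CommMonoidWithZero N] [UniqueFactorizationMonoid M]
    (f : M →* N) {a : M} {p : N} (ha : a ≠ 0) (hp : Prime p) (hpa : p ∣ f a) :
    ∃ q, Prime q ∧ q ∣ a ∧ p ∣ f q := by
  obtain ⟨factors, hprime, hprod⟩ := UniqueFactorizationMonoid.exists_prime_factors a ha
  have hp_prod : p ∣ (factors.map f).prod := by
    rw [← map_multiset_prod]
    exact hpa.trans (map_dvd f hprod.symm.dvd)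
  obtain ⟨q, hq, hpq⟩ := hp.exists_mem_multiset_map_dvd hp_prod
  exact ⟨q, hprime q hq, (Multiset.dvd_prod hq).trans hprod.dvd, hpq⟩

lemma associated_of_dvd_map_of_sq_not_dvd_map [CommMonoid N] (f : M →* N) {a q r : M} {p : N}
    (hq : Prime q) (hr : Irreducible r) (hqa : q ∣ a) (hra : r ∣ a) (hpq : p ∣ f q) (hpr : p ∣ f r)
    (hsq : ¬ p ^ 2 ∣ f a) : Associated q r := by
  suffices hqr : q ∣ r from ((hr.dvd_iff.mp hqr).resolve_left hq.not_isUnit).symm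
  by_contra hqr
  obtain ⟨b, rfl⟩ := hra
  have hqb : q ∣ b := (hq.dvd_or_dvd hqa).resolve_left hqr
  apply hsq
  rw [map_mul, sq]
  exact mul_dvd_mul hpr (hpq.trans (map_dvd f hqb))

end PrimeFactors

section UnitMultiples

variable {σ : Type*}

lemma eq_of_associated_of_coeff_eq_one {R : Type*} [CommRing R] [IsReduced R]
    {p q : MvPolynomial σ R} (hpq : Associated p q) {m : σ →₀ ℕ} (hp : coeff m p = 1)
    (hq : coeff m q = 1) : p = q := by
  obtain ⟨u, rfl⟩ := hpq
  obtain ⟨c, -, hc⟩ := isUnit_iff_eq_C_of_isReduced.mp u.isUnit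
  rw [hc, mul_comm, coeff_C_mul, hp, mul_one] at hq
  rw [hc, hq, C_1, mul_one]

lemma exists_associated_coeff_eq_one {K : Type*} [Field K] {p : MvPolynomial σ K} (hp : p ≠ 0) :
    ∃ q m, Associated p q ∧ coeff m q = 1 := by
  obtain ⟨m, hm⟩ := ne_zero_iff.mp hp
  have hunit : IsUnit (C (coeff m p)⁻¹ : MvPolynomial σ K) := (inv_ne_zero hm).isUnit.map C
  exact ⟨C (coeff m p)⁻¹ * p, m, (associated_unit_mul_left p _ hunit).symm,
    by rw [coeff_C_mul, inv_mul_cancel₀ hm]⟩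

lemma totalDegree_pos_of_irreducible_map {F A : Type*} [Field F] [CommSemiring A] (f : F →+* A)
    {p : MvPolynomial σ F} (hp : Irreducible (map f p)) : 0 < p.totalDegree := by
  by_contra! hdeg
  have hpC : p = C (coeff 0 p) := totalDegree_eq_zero_iff_eq_C.mp (Nat.le_zero.mp hdeg)
  have hcoeff : coeff 0 p ≠ 0 := by
    intro h
    exact hp.ne_zero (by rw [hpC, h, C_0, map_zero])
  apply hp.not_isUnit
  rw [hpC]
  exact (hcoeff.isUnit.map C).map (map f)

end UnitMultiples

section Descent

variable {σ : Type*}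

lemma dvd_of_map_algebraMap_dvd {R S : Type*} [CommRing R] [CommRing S] [Algebra R S]
    [Module.FaithfullyFlat R S] {p q : MvPolynomial σ R}
    (h : map (algebraMap R S) p ∣ map (algebraMap R S) q) : p ∣ q := by
  let _ : Algebra (MvPolynomial σ R) (MvPolynomial σ S) := algebraMvPolynomial
  have : Module.FaithfullyFlat (MvPolynomial σ R) (MvPolynomial σ S) :=
    .of_linearEquiv _ _
      (Algebra.IsPushout.equiv R (MvPolynomial σ R) S (MvPolynomial σ S)).symm.toLinearEquiv
  rw [← Ideal.mem_span_singleton,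
    ← Ideal.comap_map_eq_self_of_faithfullyFlat (B := MvPolynomial σ S) (Ideal.span {p}),
    Ideal.mem_comap, Ideal.map_span, Set.image_singleton, Ideal.mem_span_singleton]
  exact h

lemma map_algHom_map_algebraMap {R A B Φ : Type*} [CommSemiring R] [CommSemiring A]
    [CommSemiring B] [Algebra R A] [Algebra R B] [FunLike Φ A B] [AlgHomClass Φ R A B]
    (g : Φ) (p : MvPolynomial σ R) :
    map (g : A →+* B) (map (algebraMap R A) p) = map (algebraMap R B) p := by
  have hg : (g : A →+* B).comp (algebraMap R A) = algebraMap R B :=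
    RingHom.ext (AlgHomClass.commutes g)
  rw [map_map, hg]

variable {F K : Type*} [Field F] [Field K] [Algebra F K] [IsGalois F K]

lemma mem_range_map_of_forall_map_eq {q : MvPolynomial σ K}
    (hq : ∀ g : K ≃ₐ[F] K, map (g : K →+* K) q = q) :
    q ∈ Set.range (map (σ := σ) (algebraMap F K)) := by
  refine mem_range_map_iff_coeffs_subset.mpr fun c hc => ?_
  obtain ⟨m, -, rfl⟩ := mem_coeffs_iff.mp hc
  refine (InfiniteGalois.mem_range_algebraMap_iff_fixed _).mpr fun g => ?_
  exact (coeff_map (g : K →+* K) q m).symm.trans (congrArg (coeff m) (hq g))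

lemma exists_associated_map_of_forall_associated {q : MvPolynomial σ K}
    (hq0 : q ≠ 0) (hq : ∀ g : K ≃ₐ[F] K, Associated (map (g : K →+* K) q) q) :
    ∃ p : MvPolynomial σ F, Associated (map (algebraMap F K) p) q := by
  obtain ⟨r, m, hqr, hrm⟩ := exists_associated_coeff_eq_one hq0
  have hfix (g : K ≃ₐ[F] K) : map (g : K →+* K) r = r := by
    have hassoc : Associated (map (g : K →+* K) r) r :=
      ((hqr.symm.map (map (g : K →+* K))).trans (hq g)).trans hqr
    exact eq_of_associated_of_coeff_eq_one hassoc (by rw [coeff_map, hrm, map_one]) hrm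
  obtain ⟨p, rfl⟩ := mem_range_map_of_forall_map_eq hfix
  exact ⟨p, hqr.symm⟩

end Descent

lemma associated_map_algEquiv_of_dvd_bind₁ {σ τ A B : Type*} [CommSemiring A] [CommRing B]
    [IsDomain B] [Algebra A B]
    (s : σ → MvPolynomial τ A) {Q : MvPolynomial σ A} {P : MvPolynomial τ A}
    (hsq : ¬ map (algebraMap A B) P ^ 2 ∣
      bind₁ (fun i => map (algebraMap A B) (s i)) (map (algebraMap A B) Q))
    {R : MvPolynomial σ B} (hR : Prime R) (hRQ : R ∣ map (algebraMap A B) Q)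
    (hPR : map (algebraMap A B) P ∣ bind₁ (fun i => map (algebraMap A B) (s i)) R)
    (g : B ≃ₐ[A] B) : Associated (map (g : B →+* B) R) R := by
  have hgR : Prime (map (g : B →+* B) R) :=
    (MulEquiv.prime_iff (mapEquiv σ (g : B ≃+* B))).mpr hR
  have hgRQ : map (g : B →+* B) R ∣ map (algebraMap A B) Q := by
    simpa only [map_algHom_map_algebraMap] using map_dvd (map (g : B →+* B)) hRQ
  have hPgR : map (algebraMap A B) P ∣
      bind₁ (fun i => map (algebraMap A B) (s i)) (map (g : B →+* B) R) := by
    simpa only [map_bind₁, map_algHom_map_algebraMap] using map_dvd (map (g : B →+* B)) hPR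
  exact associated_of_dvd_map_of_sq_not_dvd_map
    (bind₁ fun i => map (algebraMap A B) (s i) : MvPolynomial σ B →* MvPolynomial τ B)
    hgR hR.irreducible hgRQ hRQ hPgR hPR hsq

theorem abs_irred_factor_from_hyperplane_section_general
    {σ τ F K : Type*} [Field F] [Field K] [Algebra F K] [IsGalois F K]
    (s : σ → MvPolynomial τ F) (Q : MvPolynomial σ F) (P : MvPolynomial τ F)
    (hP : Irreducible (map (algebraMap F K) P))
    (hdvd : P ∣ bind₁ s Q) (hsq : ¬ P ^ 2 ∣ bind₁ s Q) :
    ∃ G : MvPolynomial σ F, G ∣ Q ∧ 0 < G.totalDegree ∧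
      Irreducible (map (algebraMap F K) G) := by
  have hQ : map (algebraMap F K) Q ≠ 0 := by
    rw [Ne, map_eq_zero_iff _ (map_injective _ (algebraMap F K).injective)]
    rintro rfl
    exact hsq (by rw [map_zero]; exact dvd_zero _)
  have hdvdK : map (algebraMap F K) P ∣
      bind₁ (fun i => map (algebraMap F K) (s i)) (map (algebraMap F K) Q) := by
    rw [← map_bind₁]
    exact map_dvd _ hdvd
  have hsqK : ¬ map (algebraMap F K) P ^ 2 ∣
      bind₁ (fun i => map (algebraMap F K) (s i)) (map (algebraMap F K) Q) := by
    rw [← map_bind₁, ← map_pow]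
    exact mt dvd_of_map_algebraMap_dvd hsq
  obtain ⟨R, hR, hRQ, hPR⟩ := exists_prime_dvd_of_prime_dvd_map
    (bind₁ fun i => map (algebraMap F K) (s i) : MvPolynomial σ K →* MvPolynomial τ K)
    hQ hP.prime hdvdK
  obtain ⟨G, hGR⟩ := exists_associated_map_of_forall_associated hR.ne_zero
    (associated_map_algEquiv_of_dvd_bind₁ s hsqK hR hRQ hPR)
  have hG : Irreducible (map (algebraMap F K) G) := hGR.irreducible_iff.mpr hR.irreducible
  exact ⟨G, dvd_of_map_algebraMap_dvd (hGR.dvd.trans hRQ),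
    totalDegree_pos_of_irreducible_map _ hG, hG⟩

theorem abs_irred_factor_from_hyperplane_section
    (n : ℕ) (hn : 0 < n) (F : Type*) [Field F] [Fintype F]
    (hF : Fintype.card F = 2 ^ n)
    (Fp : MvPolynomial (Fin 4) F) (D : ℕ) (hD : 0 < D)
    (hhom : Fp.IsHomogeneous D) (ht : ¬ (X 3 : MvPolynomial (Fin 4) F) ∣ Fp)
    (P : MvPolynomial (Fin 3) F)
    (hPirr : Irreducible (MvPolynomial.map (algebraMap F (AlgebraicClosure F)) P))
    (hPdvd : P ∣ MvPolynomial.aeval (substT0 F) Fp)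
    (hP2ndvd : ¬ P ^ 2 ∣ MvPolynomial.aeval (substT0 F) Fp) :
    ∃ G : MvPolynomial (Fin 4) F, G ∣ Fp ∧ 0 < G.totalDegree ∧
      Irreducible (MvPolynomial.map (algebraMap F (AlgebraicClosure F)) G) :=
  abs_irred_factor_from_hyperplane_section_general (substT0 F) Fp P hPirr hPdvd hP2ndvd
end
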